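/- Let T and X be measurable spaces, 𝕄 a finite signed measure on T, and m : T → (finite signed measures on X) a family such that for every measurable E ⊆ X the map t ↦ (m t)(E) is measurable and there is γ > 0 with ‖m t‖ ≤ γ for all t. Suppose there is a subset B ⊆ X such that each m t is supported by B. Then the finite signed measure κ on X defined by κ(E) = ∫_T (m t)(E) d𝕄(t) is itself supported by B, i.e. κ is the pushforward along the inclusion B → X of a finite signed measure on B. -/

import Mathlib

open MeasureTheory

/-- The integral of a real-valued function with respect to a finite signed measure,
defined via the Jordan decomposition: `∫ f dμ = ∫ f dμ⁺ − ∫ f dμ⁻`. -/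
noncomputable def sintegral {X : Type*} [MeasurableSpace X] (μ : SignedMeasure X) (f : X → ℝ) : ℝ :=
  (∫ x, f x ∂μ.toJordanDecomposition.posPart) - ∫ x, f x ∂μ.toJordanDecomposition.negPart

/-- A function is integrable with respect to a finite signed measure `μ` if it is
integrable with respect to the total variation measure `|μ| = μ⁺ + μ⁻`. -/
def SIntegrable {X : Type*} [MeasurableSpace X] (μ : SignedMeasure X) (f : X → ℝ) : Prop :=
  Integrable f μ.totalVariation

/-- The total variation norm of a finite signed measure: `‖μ‖ = |μ|(X)`. -/
noncomputable def tvNorm {X : Type*} [MeasurableSpace X] (μ : SignedMeasure X) : ℝ :=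
  (μ.totalVariation Set.univ).toReal

/-!
A measurable set of `B` is a trace `B ∩ E`, and a signed measure `κ` that vanishes on the measurable
sets disjoint from `B` takes equal values on any two measurable sets with the same trace. Hence
`B ∩ E ↦ κ E` is well defined; it is countably additive because a disjoint sequence of traces
consists of the traces of a disjoint sequence. So being supported by `B` means vanishing on every
measurable set disjoint from `B`, and this property passes to integrals.
-/

section Pullback

open Set Function

theorem preimage_disjointed {X Y ι : Type*} [LinearOrder ι] [LocallyFiniteOrderBot ι]
    (f : Y → X) (E : ι → Set X) (i : ι) :
    f ⁻¹' disjointed E i = disjointed (fun j => f ⁻¹' E j) i := by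
  simp only [disjointed_eq_inter_compl, preimage_inter, preimage_iInter, preimage_compl]

variable {X Y M : Type*} [MeasurableSpace X] [AddCommMonoid M] [TopologicalSpace M] [T2Space M]
  {f : Y → X} {v : VectorMeasure X M}

theorem apply_factorsThrough_preimage
    (hv : ∀ E, MeasurableSet E → Disjoint E (range f) → v E = 0) :
    FactorsThrough (fun E : {E : Set X // MeasurableSet E} => v E) fun E => f ⁻¹' E := by
  have sdiff_null : ∀ E F : {E : Set X // MeasurableSet E}, f ⁻¹' E = f ⁻¹' F →
      v (E.1 \ F.1) = 0 := fun E F h =>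
    hv _ (E.2.diff F.2) <| preimage_eq_empty_iff.mp <| by rw [preimage_sdiff, h, sdiff_self]
  intro E F h
  have h_add := VectorMeasure.of_sdiff_of_sdiff_eq_zero E.2 F.2 (sdiff_null F E h.symm)
  simpa only [sdiff_null E F h, zero_add] using h_add.symm

variable [MeasurableSpace Y]

theorem exists_pairwise_disjoint_preimage_eq (hf : ‹MeasurableSpace Y› = .comap f ‹_›)
    {A : ℕ → Set Y} (hA : ∀ i, MeasurableSet (A i)) (hdisj : Pairwise (Disjoint on A)) :
    ∃ E : ℕ → Set X, (∀ i, MeasurableSet (E i)) ∧ Pairwise (Disjoint on E) ∧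
      ∀ i, f ⁻¹' E i = A i := by
  have exists_preimage : ∀ i, ∃ E, MeasurableSet E ∧ f ⁻¹' E = A i := fun i =>
    MeasurableSpace.measurableSet_comap.mp (hf ▸ hA i)
  choose E hE hEA using exists_preimage
  refine ⟨disjointed E, .disjointed hE, disjoint_disjointed E, fun i => ?_⟩
  rw [preimage_disjointed]
  simp only [hEA]
  exact disjointed_eq_self fun j hji => hdisj hji.ne

/-- The vector measure `f ⁻¹' E ↦ v E` on a space whose σ-algebra is pulled back along `f`. It is
used to exhibit `v` as a pushforward along `f`. Extending by zero off the sets `f ⁻¹' E` gives the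
value `0` on nonmeasurable sets. -/
noncomputable def vectorPullback (hf : ‹MeasurableSpace Y› = .comap f ‹_›)
    (hv : ∀ E, MeasurableSet E → Disjoint E (range f) → v E = 0) : VectorMeasure Y M where
  measureOf' := extend (fun E : {E : Set X // MeasurableSet E} => f ⁻¹' E) (fun E => v E) 0
  empty' := by
    simpa using (apply_factorsThrough_preimage hv).extend_apply 0 ⟨∅, .empty⟩
  not_measurable' A hA := by
    refine extend_apply' _ _ _ ?_
    rintro ⟨E, rfl⟩
    exact hA (hf ▸ ⟨E, E.2, rfl⟩)
  m_iUnion' A hA hdisj := by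
    obtain ⟨E, hE, hEdisj, hEA⟩ := exists_pairwise_disjoint_preimage_eq hf hA hdisj
    have apply_preimage := (apply_factorsThrough_preimage hv).extend_apply (0 : Set Y → M)
    obtain rfl : (fun i => f ⁻¹' E i) = A := funext hEA
    rw [← preimage_iUnion, apply_preimage ⟨_, .iUnion hE⟩]
    exact (v.m_iUnion hE hEdisj).congr_fun fun i => apply_preimage ⟨_, hE i⟩

theorem vectorPullback_preimage (hf : ‹MeasurableSpace Y› = .comap f ‹_›)
    (hv : ∀ E, MeasurableSet E → Disjoint E (range f) → v E = 0) {E : Set X}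
    (hE : MeasurableSet E) : vectorPullback hf hv (f ⁻¹' E) = v E :=
  (apply_factorsThrough_preimage hv).extend_apply 0 ⟨E, hE⟩

theorem exists_eq_map_iff_forall_disjoint_range (hf : ‹MeasurableSpace Y› = .comap f ‹_›) :
    (∃ ν : VectorMeasure Y M, v = ν.map f) ↔
      ∀ E, MeasurableSet E → Disjoint E (range f) → v E = 0 := by
  have f_meas : Measurable f := measurable_iff_comap_le.mpr hf.ge
  constructor
  · rintro ⟨ν, rfl⟩ E hE hdisj
    rw [VectorMeasure.map_apply ν f_meas hE, preimage_eq_empty hdisj, ν.empty]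
  · refine fun hv => ⟨vectorPullback hf hv, VectorMeasure.ext fun E hE => ?_⟩
    rw [VectorMeasure.map_apply _ f_meas hE, vectorPullback_preimage hf hv hE]

end Pullback

/-- The vector measure `v` is supported by the possibly nonmeasurable set `B`: it is the
pushforward along the inclusion of a vector measure on the subspace `B`. -/
def IsSupportedBy {X M : Type*} [MeasurableSpace X] [AddCommMonoid M] [TopologicalSpace M]
    (v : VectorMeasure X M) (B : Set X) : Prop :=
  ∃ ν : VectorMeasure B M, v = ν.map (Subtype.val : B → X)

theorem isSupportedBy_iff_forall_disjoint {X M : Type*} [MeasurableSpace X] [AddCommMonoid M]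
    [TopologicalSpace M] [T2Space M] {v : VectorMeasure X M} {B : Set X} :
    IsSupportedBy v B ↔ ∀ E, MeasurableSet E → Disjoint E B → v E = 0 := by
  simpa only [IsSupportedBy, Subtype.range_coe] using
    exists_eq_map_iff_forall_disjoint_range (f := (Subtype.val : B → X)) (v := v) rfl

section SignedIntegral

variable {X : Type*} [MeasurableSpace X] {μ : SignedMeasure X}

theorem sintegral_eq_zero_of_ae {f : X → ℝ} (hf : f =ᵐ[μ.totalVariation] 0) :
    sintegral μ f = 0 := by
  obtain ⟨hpos, hneg⟩ := ae_add_measure_iff.mp hf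
  rw [sintegral, integral_eq_zero_of_ae hpos, integral_eq_zero_of_ae hneg, sub_zero]

theorem sIntegrable_of_abs_le {f : X → ℝ} (hf : Measurable f) {C : ℝ} (hC : ∀ x, |f x| ≤ C) :
    SIntegrable μ f :=
  .of_bound hf.aestronglyMeasurable C (.of_forall hC)

theorem abs_apply_le_tvNorm (μ : SignedMeasure X) (E : Set X) : |μ E| ≤ tvNorm μ :=
  (μ.norm_le_totalVariation E).trans (measureReal_mono (Set.subset_univ E))

end SignedIntegral

theorem stmt11_general {T X : Type*} [MeasurableSpace T] [MeasurableSpace X]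
    (𝕄 : SignedMeasure T) (m : T → SignedMeasure X) (B : Set X)
    (hsupp : ∀ᵐ t ∂𝕄.totalVariation, IsSupportedBy (m t) B) (κ : SignedMeasure X)
    (hκ : ∀ E : Set X, MeasurableSet E →
      SIntegrable 𝕄 (fun t => m t E) ∧ κ E = sintegral 𝕄 fun t => m t E) :
    IsSupportedBy κ B := by
  refine isSupportedBy_iff_forall_disjoint.mpr fun E hE hdisj => ?_
  have null_ae : (fun t => m t E) =ᵐ[𝕄.totalVariation] 0 :=
    hsupp.mono fun t ht => isSupportedBy_iff_forall_disjoint.mp ht E hE hdisj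
  rw [(hκ E hE).2, sintegral_eq_zero_of_ae null_ae]

/-- With `m t` all supported by `B ⊆ X` and `‖m t‖ ≤ γ` uniformly, the signed
measure `κ` defined by `κ(E) = ∫_T (m t)(E) d𝕄(t)` is itself supported by `B`, i.e. it is
the pushforward along the inclusion `B → X` of a finite signed measure on `B`. -/
theorem stmt11 {T X : Type*} [MeasurableSpace T] [MeasurableSpace X]
    (𝕄 : SignedMeasure T) (m : T → SignedMeasure X)
    (hmeas : ∀ E : Set X, MeasurableSet E → Measurable fun t => m t E)
    (γ : ℝ) (hγ : 0 < γ) (hbound : ∀ t, tvNorm (m t) ≤ γ)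
    (B : Set X) (hsupp : ∀ t, ∃ ν : SignedMeasure B, m t = ν.map (Subtype.val : B → X))
    (κ : SignedMeasure X)
    (hκ : ∀ E : Set X, MeasurableSet E → κ E = sintegral 𝕄 fun t => m t E) :
    ∃ ν : SignedMeasure B, κ = ν.map (Subtype.val : B → X) :=
  stmt11_general 𝕄 m B (.of_forall hsupp) κ fun E hE =>
    ⟨sIntegrable_of_abs_le (hmeas E hE) fun t => (abs_apply_le_tvNorm (m t) E).trans (hbound t),
      hκ E hE⟩
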